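/- arXiv:0806.4156 — 3 statements merged into one kernel-verified Lean document; each statement's English description precedes it below -/
import Mathlib

section
/- Let R be a purely infinite exchange ring. Then every nonzero idempotent in R is properly infinite. -/
/-- `x ≼ y` for square matrices over a (possibly nonunital) ring: `x = α * y * β`
for some rectangular matrices `α`, `β`. -/
def MatSub {R : Type*} [NonUnitalRing R] {k n : ℕ}
    (x : Matrix (Fin k) (Fin k) R) (y : Matrix (Fin n) (Fin n) R) : Prop :=
  ∃ (α : Matrix (Fin k) (Fin n) R) (β : Matrix (Fin n) (Fin k) R), x = α * y * β

/-- `a ⊕ b ≼ c` for ring elements: the block-diagonal matrix `diag(a, b)` satisfies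
`diag(a,b) ≼ (c)` as square matrices. -/
def PairSub {R : Type*} [NonUnitalRing R] (a b c : R) : Prop :=
  MatSub !![a, 0; 0, b] !![c]

/-- `a ≼ b` for ring elements: `a = α * b * β` for some ring elements. -/
def ElemSub {R : Type*} [NonUnitalRing R] (a b : R) : Prop :=
  ∃ α β : R, a = α * b * β

/-- `K(a) = { x | a ⊕ x ≼ a }`. -/
def KSet {R : Type*} [NonUnitalRing R] (a : R) : Set R := { x | PairSub a x a }

/-- An element `a` is infinite if `a ⊕ x ≼ a` for some nonzero `x`, i.e. `K(a) ≠ 0`. -/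
def IsInfiniteElem {R : Type*} [NonUnitalRing R] (a : R) : Prop :=
  ∃ x : R, x ≠ 0 ∧ PairSub a x a

/-- An element `a` is properly infinite if `a ≠ 0` and `a ⊕ a ≼ a`. -/
def IsProperlyInfiniteElem {R : Type*} [NonUnitalRing R] (a : R) : Prop :=
  a ≠ 0 ∧ PairSub a a a

/-- A ring is s-unital if each element `x` admits `u, v` with `u * x = x` and `x * v = x`. -/
def IsSUnitalRing (R : Type*) [NonUnitalRing R] : Prop :=
  ∀ x : R, (∃ u : R, u * x = x) ∧ (∃ v : R, x * v = x)

/-- `b` belongs to `RaR`, the set of finite sums `Σ xᵢ * a * yᵢ`. -/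
def MemRaR {R : Type*} [NonUnitalRing R] (a b : R) : Prop :=
  ∃ (n : ℕ) (x y : Fin n → R), b = ∑ i, x i * a * y i

/-- A (possibly nonunital) ring is a division ring: it has a nonzero multiplicative identity
with respect to which every nonzero element is two-sided invertible. -/
def IsDivisionRingPred (R : Type*) [NonUnitalRing R] : Prop :=
  ∃ u : R, u ≠ 0 ∧ (∀ x : R, u * x = x ∧ x * u = x) ∧
    ∀ x : R, x ≠ 0 → ∃ y : R, x * y = u ∧ y * x = u

/-- A ring `R` is purely infinite if no quotient of `R` by a two-sided ideal is a division
ring, and `b ∈ RaR` implies `b = x * a * y` for some `x, y ∈ R`. -/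
def IsPurelyInfiniteRing (R : Type*) [NonUnitalRing R] : Prop :=
  (∀ I : TwoSidedIdeal R, ¬ IsDivisionRingPred I.ringCon.Quotient) ∧
  ∀ a b : R, MemRaR a b → ElemSub b a

/-- A ring is properly purely infinite if every nonzero element is properly infinite. -/
def IsProperlyPurelyInfiniteRing (R : Type*) [NonUnitalRing R] : Prop :=
  ∀ a : R, a ≠ 0 → IsProperlyInfiniteElem a

/-- An idempotent `e` is infinite if `e ∼ f ≤ e` for some idempotent `f ≠ e`. -/
def IsInfiniteIdem {R : Type*} [NonUnitalRing R] (e : R) : Prop :=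
  IsIdempotentElem e ∧ ∃ f : R, IsIdempotentElem f ∧ (∃ x y : R, e = x * y ∧ f = y * x) ∧
    e * f = f ∧ f * e = f ∧ f ≠ e

/-- An exchange ring: for each `x` there are an idempotent `e` and elements `r, s` with
`e = x * r = x + s - x * s`. -/
def IsExchangeRing (R : Type*) [NonUnitalRing R] : Prop :=
  ∀ x : R, ∃ e r s : R, IsIdempotentElem e ∧ e = x * r ∧ e = x + s - x * s

/-- A ring has local units if every finite subset is contained in a corner `eRe`
for some idempotent `e`. -/
def HasLocalUnits (R : Type*) [NonUnitalRing R] : Prop :=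
  ∀ s : Finset R, ∃ e : R, IsIdempotentElem e ∧ ∀ x ∈ s, ∃ r : R, x = e * r * e

/-- Two-sided ideals as sets. -/
structure IsId {R : Type*} [NonUnitalRing R] (P : Set R) : Prop where
  zero : (0 : R) ∈ P
  add : ∀ x y, x ∈ P → y ∈ P → x + y ∈ P
  neg : ∀ x, x ∈ P → -x ∈ P
  ml : ∀ r x, x ∈ P → r * x ∈ P
  mr : ∀ x r, x ∈ P → x * r ∈ P

theorem IsId.sub {R : Type*} [NonUnitalRing R] {P : Set R} (h : IsId P) {x y : R}
    (hx : x ∈ P) (hy : y ∈ P) : x - y ∈ P := by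
  rw [sub_eq_add_neg]; exact h.add _ _ hx (h.neg _ hy)

/-- If `x - y ∈ P` and `y ∈ P` then `x ∈ P`. -/
theorem IsId.of_sub {R : Type*} [NonUnitalRing R] {P : Set R} (h : IsId P) {x y : R}
    (hxy : x - y ∈ P) (hy : y ∈ P) : x ∈ P := by
  have := h.add _ _ hxy hy
  simpa using this

theorem IsId.of_sub' {R : Type*} [NonUnitalRing R] {P : Set R} (h : IsId P) {x y : R}
    (hxy : x - y ∈ P) (hx : x ∈ P) : y ∈ P := by
  have := h.sub hx hxy
  simpa using this

theorem pairSub_iff {R : Type*} [NonUnitalRing R] (a b c : R) :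
    PairSub a b c ↔ ∃ a1 a2 b1 b2 : R, a1 * c * b1 = a ∧ a1 * c * b2 = 0 ∧
      a2 * c * b1 = 0 ∧ a2 * c * b2 = b := by
  constructor
  · rintro ⟨α, β, h⟩
    refine ⟨α 0 0, α 1 0, β 0 0, β 0 1, ?_, ?_, ?_, ?_⟩
    · have := congrFun (congrFun h 0) 0
      simpa [Matrix.mul_apply] using this.symm
    · have := congrFun (congrFun h 0) 1
      simpa [Matrix.mul_apply] using this.symm
    · have := congrFun (congrFun h 1) 0
      simpa [Matrix.mul_apply] using this.symm
    · have := congrFun (congrFun h 1) 1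
      simpa [Matrix.mul_apply] using this.symm
  · rintro ⟨a1, a2, b1, b2, h1, h2, h3, h4⟩
    refine ⟨!![a1; a2], !![b1, b2], ?_⟩
    ext i j
    fin_cases i <;> fin_cases j <;> simp [Matrix.mul_apply, h1, h2, h3, h4]

theorem isId_K {R : Type*} [NonUnitalRing R] (e : R) (he : e * e = e) :
    IsId {x : R | PairSub e x e} := by
  constructor
  · simp only [Set.mem_ofPred_eq, pairSub_iff]
    exact ⟨e, 0, e, 0, by simp [he], by simp, by simp, by simp⟩
  · intro x y hx hy
    simp only [Set.mem_ofPred_eq, pairSub_iff] at *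
    obtain ⟨a1, a2, b1, b2, h1, h2, h3, h4⟩ := hx
    obtain ⟨c1, c2, d1, d2, k1, k2, k3, k4⟩ := hy
    have key : ∀ a b : R, a * c1 * e * (d1 * b) = a * e * b := by
      intro a b
      have : a * c1 * e * (d1 * b) = a * (c1 * e * d1) * b := by simp only [mul_assoc]
      rw [this, k1]
    have key2 : ∀ a : R, a * c1 * e * d2 = 0 := by
      intro a
      rw [mul_assoc, mul_assoc, ← mul_assoc c1, k2, mul_zero]
    have key3 : ∀ b : R, c2 * e * (d1 * b) = 0 := by
      intro b
      rw [← mul_assoc, k3, zero_mul]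
    refine ⟨a1 * c1, a2 * c1 + c2, d1 * b1, d1 * b2 + d2, ?_, ?_, ?_, ?_⟩
    · rw [key, h1]
    · rw [mul_add, key, key2, h2, add_zero]
    · rw [add_mul, add_mul, key, key3, h3, add_zero]
    · rw [add_mul, add_mul, mul_add, mul_add, key, key2, key3, h4, k4, add_zero, zero_add]
  · intro x hx
    simp only [Set.mem_ofPred_eq, pairSub_iff] at *
    obtain ⟨a1, a2, b1, b2, h1, h2, h3, h4⟩ := hx
    exact ⟨a1, -a2, b1, b2, h1, h2, by simp [h3], by simp [h4]⟩
  · intro r x hx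
    simp only [Set.mem_ofPred_eq, pairSub_iff] at *
    obtain ⟨a1, a2, b1, b2, h1, h2, h3, h4⟩ := hx
    refine ⟨a1, r * a2, b1, b2, h1, h2, ?_, ?_⟩
    · rw [mul_assoc, mul_assoc, ← mul_assoc a2, h3, mul_zero]
    · rw [mul_assoc, mul_assoc, ← mul_assoc a2, h4]
  · intro x r hx
    simp only [Set.mem_ofPred_eq, pairSub_iff] at *
    obtain ⟨a1, a2, b1, b2, h1, h2, h3, h4⟩ := hx
    refine ⟨a1, a2, b1, b2 * r, h1, ?_, h3, ?_⟩
    · rw [← mul_assoc, h2, zero_mul]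
    · rw [← mul_assoc, h4]

/-- Elementwise form of: no quotient is a division ring. -/
theorem no_div {R : Type*} [NonUnitalRing R] (hpi : IsPurelyInfiniteRing R)
    (I : Set R) (hI : IsId I) (u : R) (hu : u ∉ I)
    (h1 : ∀ x, u * x - x ∈ I ∧ x * u - x ∈ I)
    (h2 : ∀ x, x ∉ I → ∃ y, x * y - u ∈ I ∧ y * x - u ∈ I) : False := by
  let T : TwoSidedIdeal R := TwoSidedIdeal.mk' I hI.zero (fun {x y} hx hy => hI.add x y hx hy)
    (fun {x} hx => hI.neg x hx) (fun {x y} hy => hI.ml x y hy) (fun {x y} hx => hI.mr x y hx)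
  have hT : ∀ x, x ∈ T ↔ x ∈ I := fun x => TwoSidedIdeal.mem_mk' ..
  have hq : ∀ x y : R, ((x : T.ringCon.Quotient) = (y : T.ringCon.Quotient)) ↔ x - y ∈ I := by
    intro x y
    rw [← hT, ← TwoSidedIdeal.rel_iff, RingCon.eq]
  apply hpi.1 T
  refine ⟨(u : T.ringCon.Quotient), ?_, ?_, ?_⟩
  · intro h
    have := (hq u 0).1 h
    rw [sub_zero] at this
    exact hu this
  · intro x
    obtain ⟨x, rfl⟩ := Quotient.exists_rep x
    exact ⟨(hq (u * x) x).2 (h1 x).1, (hq (x * u) x).2 (h1 x).2⟩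
  · intro x
    obtain ⟨x, rfl⟩ := Quotient.exists_rep x
    intro hx
    have hxI : x ∉ I := by
      intro h
      exact hx ((hq x 0).2 (by simpa using h))
    obtain ⟨y, hy1, hy2⟩ := h2 x hxI
    exact ⟨(y : T.ringCon.Quotient), (hq (x * y) u).2 hy1, (hq (y * x) u).2 hy2⟩

theorem memRaR_two {R : Type*} [NonUnitalRing R] (a x1 y1 x2 y2 : R) :
    MemRaR a (x1 * a * y1 + x2 * a * y2) :=
  ⟨2, ![x1, x2], ![y1, y2], by simp [Fin.sum_univ_two]⟩

theorem memRaR_zero {R : Type*} [NonUnitalRing R] (a : R) : MemRaR a 0 :=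
  ⟨0, Fin.elim0, Fin.elim0, by simp⟩

theorem memRaR_neg {R : Type*} [NonUnitalRing R] (a b : R) (h : MemRaR a b) : MemRaR a (-b) := by
  obtain ⟨n, x, y, rfl⟩ := h
  exact ⟨n, fun i => -x i, y, by simp⟩

theorem memRaR_add {R : Type*} [NonUnitalRing R] (a b c : R) (h : MemRaR a b) (h' : MemRaR a c) :
    MemRaR a (b + c) := by
  obtain ⟨n, x, y, rfl⟩ := h
  obtain ⟨m, x', y', rfl⟩ := h'
  exact ⟨n + m, Fin.append x x', Fin.append y y', by simp [Fin.sum_univ_add]⟩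

theorem memRaR_one {R : Type*} [NonUnitalRing R] (a x y : R) : MemRaR a (x * a * y) :=
  ⟨1, fun _ => x, fun _ => y, by simp⟩

/-- Corners have no division ring quotients: left part. -/
theorem corner_left {R : Type*} [NonUnitalRing R] (hpi : IsPurelyInfiniteRing R)
    (P : Set R) (hP : IsId P) (e : R) (he : e * e = e)
    (hd : ∀ x, e * x = x → x * e = x → x ∉ P →
      ∃ y, e * y = y ∧ y * e = y ∧ x * y - e ∈ P ∧ y * x - e ∈ P)
    (heP : e ∉ P)
    (x r s : R) : e * r * (x * e - e * x * e) * s * e ∈ P := by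
  by_contra hc
  have he' : ∀ z, e * (e * z) = e * z := fun z => by rw [← mul_assoc, he]
  obtain ⟨f, hf⟩ : ∃ f, f = x * e - e * x * e := ⟨_, rfl⟩
  rw [← hf] at hc
  have hef : e * f = 0 := by simp [hf, mul_sub, mul_assoc, he']
  have hfe : f * e = f := by simp [hf, sub_mul, mul_assoc, he]
  have h1 : e * r * f ∉ P := fun h => hc (by
    have := hP.mr _ (s * e) h
    simpa only [mul_assoc] using this)
  obtain ⟨y, hy1, hy2, -, hy4⟩ := hd (e * r * f) (by simp only [mul_assoc, he'])
    (by simp only [mul_assoc, hfe]) h1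
  obtain ⟨g, hg⟩ : ∃ g, g = y * r - y * r * e := ⟨_, rfl⟩
  have heg : e * g = g := by rw [hg, mul_sub, ← mul_assoc, ← mul_assoc, ← mul_assoc, hy1]
  have hge : g * e = 0 := by simp [hg, sub_mul, mul_assoc, he]
  have hgf : g * f - e ∈ P := by
    have : g * f = y * (e * r * f) := by
      rw [hg, sub_mul, mul_assoc (y * r), hef, mul_zero, sub_zero, ← mul_assoc, ← mul_assoc, hy2]
    rwa [this]
  obtain ⟨a, b, hab⟩ := hpi.2 e (e + f * g) (by
    have := memRaR_two e e e f g
    rwa [he, he, hfe] at this)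
  have k1 : e * a * e * (e * b * e) = e := by
    have : e * (e + f * g) * e = e := by
      rw [mul_add, add_mul, he, he, ← mul_assoc, hef]; simp
    rw [hab] at this
    simpa only [mul_assoc, he'] using this
  have k2 : e * a * e * (b * f) = 0 := by
    have : e * (e + f * g) * f = 0 := by
      rw [mul_add, add_mul, he, hef, ← mul_assoc, hef]; simp
    rw [hab] at this
    simpa only [mul_assoc] using this
  have h2 : e * a * e ∉ P := fun h => heP (by rw [← k1]; exact hP.mr _ _ h)
  obtain ⟨y', hy1', hy2', -, hy4'⟩ := hd (e * a * e) (by simp only [mul_assoc, he'])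
    (by simp only [mul_assoc, he]) h2
  have k3 : e * (b * f) ∈ P := by
    have := hP.mr _ (b * f) hy4'
    rw [sub_mul, mul_assoc, k2, mul_zero] at this
    exact hP.of_sub' this hP.zero
  have k4 : f * (g * f) ∈ P := by
    have : f * (g * f) = (e + f * g) * f := by rw [add_mul, hef, zero_add, mul_assoc]
    rw [this, hab]
    have := hP.ml a _ k3
    simpa only [mul_assoc] using this
  have k5 : f ∈ P := by
    have := hP.ml f _ hgf
    rw [mul_sub, hfe] at this
    exact hP.of_sub' this k4
  exact h1 (hP.ml _ _ k5)

/-- Corners have no division ring quotients: right part. -/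
theorem corner_right {R : Type*} [NonUnitalRing R] (hpi : IsPurelyInfiniteRing R)
    (P : Set R) (hP : IsId P) (e : R) (he : e * e = e)
    (hd : ∀ x, e * x = x → x * e = x → x ∉ P →
      ∃ y, e * y = y ∧ y * e = y ∧ x * y - e ∈ P ∧ y * x - e ∈ P)
    (heP : e ∉ P)
    (x r s : R) : e * r * (e * x - e * x * e) * s * e ∈ P := by
  by_contra hc
  have he' : ∀ z, e * (e * z) = e * z := fun z => by rw [← mul_assoc, he]
  obtain ⟨f, hf⟩ : ∃ f, f = e * x - e * x * e := ⟨_, rfl⟩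
  rw [← hf] at hc
  have hef : e * f = f := by simp [hf, mul_sub, mul_assoc, he']
  have hef' : ∀ z, e * (f * z) = f * z := fun z => by rw [← mul_assoc, hef]
  have hfe : f * e = 0 := by simp [hf, sub_mul, mul_assoc, he]
  have h1 : f * s * e ∉ P := fun h => hc (by
    have := hP.ml (e * r) _ h
    simpa only [mul_assoc] using this)
  obtain ⟨y, hy1, hy2, hy4, -⟩ := hd (f * s * e) (by simp only [mul_assoc, hef'])
    (by simp only [mul_assoc, he]) h1
  obtain ⟨g, hg⟩ : ∃ g, g = s * y - e * s * y := ⟨_, rfl⟩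
  have hge : g * e = g := by rw [hg, sub_mul, mul_assoc, mul_assoc, hy2]
  have heg : e * g = 0 := by simp [hg, mul_sub, mul_assoc, he']
  have hgf : f * g - e ∈ P := by
    have : f * g = f * s * e * y := by
      rw [hg, mul_sub, mul_assoc e, ← mul_assoc f e, hfe, zero_mul, sub_zero, mul_assoc _ e y, hy1,
        mul_assoc]
    rwa [this]
  obtain ⟨a, b, hab⟩ := hpi.2 e (e + g * f) (by
    have := memRaR_two e e e g f
    rwa [he, he, hge] at this)
  have k1 : e * a * e * (e * b * e) = e := by
    have : e * (e + g * f) * e = e := by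
      rw [mul_add, add_mul, he, he, ← mul_assoc, heg]; simp
    rw [hab] at this
    simpa only [mul_assoc, he'] using this
  have k2 : f * a * (e * b * e) = 0 := by
    have : f * (e + g * f) * e = 0 := by
      rw [mul_add, add_mul, hfe, mul_assoc, mul_assoc, hfe]; simp
    rw [hab] at this
    simpa only [mul_assoc] using this
  have h2 : e * b * e ∉ P := fun h => heP (by rw [← k1]; exact hP.ml _ _ h)
  obtain ⟨y', hy1', hy2', hy4', -⟩ := hd (e * b * e) (by simp only [mul_assoc, he'])
    (by simp only [mul_assoc, he]) h2
  have k3 : f * a * e ∈ P := by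
    have := hP.ml (f * a) _ hy4'
    rw [mul_sub, ← mul_assoc, k2, zero_mul] at this
    exact hP.of_sub' this hP.zero
  have k4 : f * g * f ∈ P := by
    have : f * g * f = f * (e + g * f) := by rw [mul_add, hfe, zero_add, mul_assoc]
    rw [this, hab]
    have := hP.mr _ b k3
    simpa only [mul_assoc] using this
  have k5 : f ∈ P := by
    have := hP.mr _ f hgf
    rw [sub_mul, hef] at this
    exact hP.of_sub' this k4
  exact h1 (hP.mr _ _ (hP.mr _ _ k5))

theorem corner_not_div {R : Type*} [NonUnitalRing R] (hpi : IsPurelyInfiniteRing R)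
    (P : Set R) (hP : IsId P) (e : R) (he : e * e = e) (heP : e ∉ P)
    (hd : ∀ x, e * x = x → x * e = x → x ∉ P →
      ∃ y, e * y = y ∧ y * e = y ∧ x * y - e ∈ P ∧ y * x - e ∈ P) : False := by
  have he' : ∀ z, e * (e * z) = e * z := fun z => by rw [← mul_assoc, he]
  have hL := corner_left hpi P hP e he hd heP
  have hRt := corner_right hpi P hP e he hd heP
  obtain ⟨I, hIdef⟩ : ∃ I : Set R, I = {x | ∀ r s, e * r * x * s * e ∈ P} := ⟨_, rfl⟩
  have hmem : ∀ x, x ∈ I ↔ ∀ r s, e * r * x * s * e ∈ P := fun x => by rw [hIdef]; rfl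
  have hI : IsId I := by
    constructor
    · rw [hmem]; intro r s; simpa using hP.zero
    · intro x y hx hy
      rw [hmem] at *
      intro r s
      have := hP.add _ _ (hx r s) (hy r s)
      simpa only [mul_add, add_mul] using this
    · intro x hx
      rw [hmem] at *
      intro r s
      have := hP.neg _ (hx r s)
      simpa using this
    · intro t x hx
      rw [hmem] at *
      intro r s
      have := hx (r * t) s
      simpa only [mul_assoc] using this
    · intro x t hx
      rw [hmem] at *
      intro r s
      have := hx r (t * s)
      simpa only [mul_assoc] using this
  have hPI : ∀ x, x ∈ P → x ∈ I := by
    intro x hx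
    rw [hmem]
    intro r s
    exact hP.mr _ _ (hP.mr _ _ (hP.ml _ _ hx))
  have heI : e ∉ I := by
    intro h
    have := (hmem e).1 h e e
    simp only [he] at this
    exact heP this
  have hl : ∀ x, x * e - e * x * e ∈ I := fun x => (hmem _).2 (hL x)
  have hr : ∀ x, e * x - e * x * e ∈ I := fun x => (hmem _).2 (hRt x)
  have hx0 : ∀ x, x - e * x * e ∈ I := by
    intro x
    rw [hmem]
    intro r s
    -- reduce to membership in I
    have h1 : e * r * (x - e * x * e) * s * e ∈ I := by
      have t1 := hI.mr _ ((x - e * x * e) * s * e) (hr r)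
      have t2 := hI.ml (e * r * e * (x - e * x * e)) _ (hl s)
      have t3 := hI.add _ _ t1 t2
      convert t3 using 1
      simp only [mul_sub, sub_mul, mul_assoc, he, he']
      abel
    have := (hmem _).1 h1 e e
    simpa only [mul_assoc, he, he'] using this
  refine no_div hpi I hI e heI ?_ ?_
  · intro x
    constructor
    · have := hI.sub (hr x) (hx0 x)
      convert this using 1; abel
    · have := hI.sub (hl x) (hx0 x)
      convert this using 1; abel
  · intro x hx
    have hx1 : e * x * e ∉ P := fun h => hx (hI.of_sub (hx0 x) (hPI _ h))
    obtain ⟨y, h1, h2, h3, h4⟩ := hd (e * x * e) (by simp only [mul_assoc, he'])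
      (by simp only [mul_assoc, he]) hx1
    refine ⟨y, ?_, ?_⟩
    · have := hI.add _ _ (hI.mr _ y (hx0 x)) (hPI _ h3)
      convert this using 1
      rw [sub_mul]; abel
    · have := hI.add _ _ (hI.ml y _ (hx0 x)) (hPI _ h4)
      convert this using 1
      rw [mul_sub]; abel

theorem corner_exchange {R : Type*} [NonUnitalRing R] (hex : IsExchangeRing R) (e q : R)
    (he : e * e = e) (h1 : e * q = q) (h2 : q * e = q) :
    ∃ f r s, f * f = f ∧ e * f = f ∧ f * e = f ∧ e * r = r ∧ r * e = r ∧ e * s = s ∧ s * e = s ∧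
      f = q * r ∧ f = q + s - q * s := by
  have he' : ∀ z, e * (e * z) = e * z := fun z => by rw [← mul_assoc, he]
  have h1' : ∀ z, e * (q * z) = q * z := fun z => by rw [← mul_assoc, h1]
  have h2' : ∀ z, q * (e * z) = q * z := fun z => by rw [← mul_assoc, h2]
  obtain ⟨g, r, s, hg, hgr, hgs⟩ := hex q
  have hg' : g * g = g := hg
  have heg : e * g = g := by rw [hgr, h1']
  refine ⟨g * e, e * r * e, e * s * e, ?_, ?_, ?_, ?_, ?_, ?_, ?_, ?_, ?_⟩
  · rw [mul_assoc, ← mul_assoc e, heg, ← mul_assoc, hg']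
  · rw [← mul_assoc, heg]
  · rw [mul_assoc, he]
  · simp only [mul_assoc, he']
  · simp only [mul_assoc, he]
  · simp only [mul_assoc, he']
  · simp only [mul_assoc, he]
  · simp only [mul_assoc, h2']; rw [hgr, mul_assoc]
  · have : g * e = e * (g * e) := by rw [← mul_assoc, heg]
    rw [this, hgs]
    simp only [mul_assoc, sub_mul, mul_sub, add_mul, mul_add, h2', h1', h2, h1]

/-- A maximal ideal above `K` avoiding `e`. -/
theorem exists_max {R : Type*} [NonUnitalRing R] (K : Set R) (hK : IsId K) (e : R) (heK : e ∉ K) :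
    ∃ P : Set R, IsId P ∧ K ⊆ P ∧ e ∉ P ∧ ∀ Q : Set R, IsId Q → P ⊆ Q → e ∉ Q → Q ⊆ P := by
  obtain ⟨P, hKP, hP⟩ := zorn_subset_nonempty {S : Set R | IsId S ∧ e ∉ S} (by
    intro c hc hchain hne
    have hc' : ∀ s ∈ c, IsId s ∧ e ∉ s := fun s hs => hc hs
    refine ⟨⋃₀ c, ⟨?_, ?_⟩, fun s hs => Set.subset_sUnion_of_mem hs⟩
    · constructor
      · obtain ⟨s, hs⟩ := hne
        exact ⟨s, hs, (hc' s hs).1.zero⟩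
      · rintro x y ⟨s, hs, hxs⟩ ⟨t, ht, hyt⟩
        rcases hchain.total hs ht with h | h
        · exact ⟨t, ht, (hc' t ht).1.add _ _ (h hxs) hyt⟩
        · exact ⟨s, hs, (hc' s hs).1.add _ _ hxs (h hyt)⟩
      · rintro x ⟨s, hs, hxs⟩
        exact ⟨s, hs, (hc' s hs).1.neg _ hxs⟩
      · rintro r x ⟨s, hs, hxs⟩
        exact ⟨s, hs, (hc' s hs).1.ml _ _ hxs⟩
      · rintro x r ⟨s, hs, hxs⟩
        exact ⟨s, hs, (hc' s hs).1.mr _ _ hxs⟩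
    · rintro ⟨s, hs, hes⟩
      exact (hc' s hs).2 hes) K ⟨hK, heK⟩
  refine ⟨P, hP.prop.1, hKP, hP.prop.2, ?_⟩
  intro Q hQ hPQ heQ
  exact hP.le_of_ge ⟨hQ, heQ⟩ hPQ

theorem max_simple {R : Type*} [NonUnitalRing R] (hpi : IsPurelyInfiniteRing R)
    (P : Set R) (hP : IsId P) (e : R) (he : e * e = e)
    (hmax : ∀ Q : Set R, IsId Q → P ⊆ Q → e ∉ Q → Q ⊆ P) (x : R) (hx : x ∉ P) :
    ∃ a b, e * a = a ∧ b * e = b ∧ e - a * x * b ∈ P := by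
  have he' : ∀ z, e * (e * z) = e * z := fun z => by rw [← mul_assoc, he]
  have key : e ∈ {z : R | ∀ r s, ∃ c, MemRaR x c ∧ e * r * z * s * e - c ∈ P} := by
    by_contra hcon
    have := hmax {z : R | ∀ r s, ∃ c, MemRaR x c ∧ e * r * z * s * e - c ∈ P} ?_ ?_ hcon
    · apply hx
      apply this
      intro r s
      refine ⟨e * r * x * (s * e), memRaR_one _ _ _, ?_⟩
      simpa only [mul_assoc, sub_self] using hP.zero
    · constructor
      · intro r s
        exact ⟨0, memRaR_zero _, by simpa using hP.zero⟩
      · intro y z hy hz r s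
        obtain ⟨c, hc, h⟩ := hy r s
        obtain ⟨c', hc', h'⟩ := hz r s
        refine ⟨c + c', memRaR_add _ _ _ hc hc', ?_⟩
        have := hP.add _ _ h h'
        convert this using 1
        simp only [mul_add, add_mul]; abel
      · intro y hy r s
        obtain ⟨c, hc, h⟩ := hy r s
        refine ⟨-c, memRaR_neg _ _ hc, ?_⟩
        have := hP.neg _ h
        convert this using 1
        simp only [mul_neg, neg_mul]; abel
      · intro t y hy r s
        obtain ⟨c, hc, h⟩ := hy (r * t) s
        exact ⟨c, hc, by simpa only [mul_assoc] using h⟩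
      · intro y t hy r s
        obtain ⟨c, hc, h⟩ := hy r (t * s)
        exact ⟨c, hc, by simpa only [mul_assoc] using h⟩
    · intro z hz r s
      refine ⟨0, memRaR_zero _, ?_⟩
      rw [sub_zero]
      exact hP.mr _ _ (hP.mr _ _ (hP.ml _ _ hz))
  obtain ⟨c, hc, h⟩ := key e e
  obtain ⟨a, b, hab⟩ := hpi.2 x c hc
  refine ⟨e * a, b * e, by rw [he'], by rw [mul_assoc, he], ?_⟩
  simp only [he] at h
  have := hP.mr _ e (hP.ml e _ h)
  rw [hab] at this
  simpa only [mul_sub, sub_mul, he, mul_assoc] using this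

/-- Existence of an idempotent splitting `e` modulo `P`. -/
theorem exists_split {R : Type*} [NonUnitalRing R] (hex : IsExchangeRing R)
    (hpi : IsPurelyInfiniteRing R)
    (P : Set R) (hP : IsId P) (e : R) (he : e * e = e) (heP : e ∉ P)
    (hmax : ∀ Q : Set R, IsId Q → P ⊆ Q → e ∉ Q → Q ⊆ P) :
    ∃ f, f * f = f ∧ e * f = f ∧ f * e = f ∧ f ∉ P ∧ e - f ∉ P := by
  by_contra hcon
  push Not at hcon
  have he' : ∀ z, e * (e * z) = e * z := fun z => by rw [← mul_assoc, he]
  have hri : ∀ x, e * x = x → x * e = x → x ∉ P → ∃ y, e * y = y ∧ y * e = y ∧ x * y - e ∈ P := by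
    intro x hx1 hx2 hxP
    obtain ⟨a, b, ha, hb, hab⟩ := max_simple hpi P hP e he hmax x hxP
    have hx1' : ∀ z, e * (x * z) = x * z := fun z => by rw [← mul_assoc, hx1]
    have hx2' : ∀ z, x * (e * z) = x * z := fun z => by rw [← mul_assoc, hx2]
    -- replace `a`, `b` by corner elements
    obtain ⟨q, hq⟩ : ∃ q, q = x * b * a * e := ⟨_, rfl⟩
    obtain ⟨f, r, s, hff, hef, hfe, her, hre, hes, hse, hfr, hfs⟩ := corner_exchange hex e q he
      (by simp only [hq, mul_assoc, hx1']) (by simp only [hq, mul_assoc, he])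
    by_cases hfP : f ∈ P
    · exfalso
      -- q f = q (q + s - q s), and q q ≡ q, so q ∈ P
      have hqq : q - q * q ∈ P := by
        have := hP.mr _ (a * e) (hP.ml (x * b) _ hab)
        convert this using 1
        simp only [hq, mul_sub, sub_mul, mul_assoc]
        rw [← mul_assoc e a, ha, ← mul_assoc e x, hx1]
      have hqP : q ∈ P := by
        have t1 : q * f ∈ P := hP.ml q _ hfP
        have t2 : (q - q * q) * s ∈ P := hP.mr _ s hqq
        have t3 := hP.add _ _ (hP.sub t1 t2) hqq
        convert t3 using 1
        rw [hfs]
        simp only [mul_sub, sub_mul, mul_add, mul_assoc]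
        abel
      -- a q x b ≡ e
      apply heP
      have t1 : a * q * (x * b) ∈ P := hP.mr _ _ (hP.ml a _ hqP)
      have t2 : e - a * q * (x * b) ∈ P := by
        have := hP.add _ _ hab (hP.ml (a * x * b) _ hab)
        convert this using 1
        simp only [hq, mul_sub, mul_assoc, hx1', hb]
        abel
      exact hP.of_sub t2 t1
    · refine ⟨e * (b * a * r), by rw [he'], by simp only [mul_assoc, hre], ?_⟩
      have h := hcon f hff hef hfe hfP
      have h' := hP.neg _ h
      convert h' using 1
      rw [neg_sub]
      congr 1
      rw [hfr, hq]
      simp only [mul_assoc, hx2', her]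
  refine corner_not_div hpi P hP e he heP ?_
  intro x hx1 hx2 hxP
  obtain ⟨y, hy1, hy2, hxy⟩ := hri x hx1 hx2 hxP
  have hyP : y ∉ P := fun h => heP (hP.of_sub' hxy (hP.ml x _ h))
  obtain ⟨z, hz1, hz2, hyz⟩ := hri y hy1 hy2 hyP
  refine ⟨y, hy1, hy2, hxy, ?_⟩
  -- y x - e = y(x - z) + (yz - e);  x - z = -(x (yz - e)) + (xy - e) z
  have hxz : x - z ∈ P := by
    have := hP.sub (hP.mr _ z hxy) (hP.ml x _ hyz)
    convert this using 1
    simp only [mul_sub, sub_mul, mul_assoc, hz1, hx2]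
    abel
  have := hP.add _ _ (hP.ml y _ hxz) hyz
  convert this using 1
  rw [mul_sub]; abel

/-- `g = u v` with `g`, `v u` orthogonal, under a larger idempotent `e`, gives `e ⊕ g ≼ e`. -/
theorem absorb {R : Type*} [NonUnitalRing R] (hpi : IsPurelyInfiniteRing R) (e g u v : R)
    (he : e * e = e) (hg : g * g = g) (heg : e * g = g) (hge : g * e = g)
    (huv : u * v = g) (hgu : g * u = u) (hvg : v * g = v) (hgv : g * v = 0) (hug : u * g = 0) :
    PairSub e g e := by
  obtain ⟨a, b, hab⟩ := hpi.2 g (g + v * u) (by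
    have := memRaR_two g g g v u
    rwa [hg, hg, hvg] at this)
  have hg' : ∀ z, g * (g * z) = g * z := fun z => by rw [← mul_assoc, hg]
  have heg' : ∀ z, e * (g * z) = g * z := fun z => by rw [← mul_assoc, heg]
  have hge' : ∀ z, g * (e * z) = g * z := fun z => by rw [← mul_assoc, hge]
  have hgu' : ∀ z, g * (u * z) = u * z := fun z => by rw [← mul_assoc, hgu]
  have huv' : ∀ z, u * (v * z) = g * z := fun z => by rw [← mul_assoc, huv]
  have hgv' : ∀ z, g * (v * z) = 0 := fun z => by rw [← mul_assoc, hgv, zero_mul]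
  have hug' : ∀ z, u * (g * z) = 0 := fun z => by rw [← mul_assoc, hug, zero_mul]
  have m11 : g * (a * (g * (b * g))) = g := by
    have : g * (a * g * b) * g = g := by
      rw [← hab]; simp [mul_add, add_mul, mul_assoc, hg, hgv']
    simpa only [mul_assoc] using this
  have m12 : g * (a * (g * (b * v))) = 0 := by
    have : g * (a * g * b) * v = 0 := by
      rw [← hab]; simp [mul_add, add_mul, mul_assoc, hgv, hgv']
    simpa only [mul_assoc] using this
  have m21 : u * (a * (g * (b * g))) = 0 := by
    have : u * (a * g * b) * g = 0 := by
      rw [← hab]; simp [mul_add, add_mul, mul_assoc, hug, huv', hgu', hug, hg]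
    simpa only [mul_assoc] using this
  have m22 : u * (a * (g * (b * v))) = g := by
    have : u * (a * g * b) * v = g := by
      rw [← hab]; simp [mul_add, add_mul, mul_assoc, hgv, huv, hvg]
    simpa only [mul_assoc] using this
  rw [pairSub_iff]
  refine ⟨(e - g) + g * a * g, u * a * g, (e - g) + g * b * g, g * b * v, ?_, ?_, ?_, ?_⟩
  · simp only [mul_add, add_mul, mul_sub, sub_mul, mul_assoc, he, heg, hge, hg, hg', heg', hge', m11]
    abel
  · simp only [add_mul, sub_mul, mul_assoc, hg', heg', hge', m12]
    abel
  · simp only [mul_add, mul_sub, mul_assoc, hge, hg, hg', hge', m21]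
    abel
  · simp only [mul_assoc, hg', hge', m22]

/-- Proposition 5.8 (ExchangePi1infinite): in a purely infinite exchange ring, every nonzero
idempotent is properly infinite. -/
theorem idempotents_properlyInfinite_in_purelyInfinite_exchange {R : Type*} [NonUnitalRing R]
    (hex : IsExchangeRing R) (hpi : IsPurelyInfiniteRing R) :
    ∀ e : R, IsIdempotentElem e → e ≠ 0 → IsProperlyInfiniteElem e := by
  intro e he0 hne
  have he : e * e = e := he0
  refine ⟨hne, ?_⟩
  by_contra hcon
  obtain ⟨P, hP, hKP, heP, hmax⟩ := exists_max {x : R | PairSub e x e} (isId_K e he) e hcon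
  obtain ⟨f, hff, hef, hfe, hfP, hefP⟩ := exists_split hex hpi P hP e he heP hmax
  obtain ⟨x, y, hx, hy, hxy⟩ := max_simple hpi P hP e he hmax (e - f) hefP
  have hff' : ∀ z, f * (f * z) = f * z := fun z => by rw [← mul_assoc, hff]
  obtain ⟨d, hd⟩ : ∃ d, d = e - f := ⟨_, rfl⟩
  rw [← hd] at hxy
  have hdd : d * d = d := by
    rw [hd]; simp only [mul_sub, sub_mul, he, hef, hfe, hff]; abel
  have hdf : d * f = 0 := by rw [hd, sub_mul, hef, hff, sub_self]
  have hfd : f * d = 0 := by rw [hd, mul_sub, hfe, hff, sub_self]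
  have hdd' : ∀ z, d * (d * z) = d * z := fun z => by rw [← mul_assoc, hdd]
  obtain ⟨a, ha⟩ : ∃ a, a = f * x * d * y * f := ⟨_, rfl⟩
  have haf : a - f ∈ P := by
    have := hP.neg _ (hP.mr _ f (hP.ml f _ hxy))
    convert this using 1
    simp only [ha, mul_sub, sub_mul, hfe, hff, mul_assoc, neg_sub]
  obtain ⟨g, r, s, hg, hfg, hgf, hfr, hrf, hfs, hsf, hgr, hgs⟩ := corner_exchange hex f a hff
    (by simp only [ha, mul_assoc, hff']) (by simp only [ha, mul_assoc, hff])
  have hgP : g ∉ P := by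
    intro h
    apply hfP
    have t : g - f ∈ P := by
      have := hP.sub haf (hP.mr _ s haf)
      convert this using 1
      rw [hgs, sub_mul, hfs]; abel
    exact hP.of_sub' t h
  apply hgP
  apply hKP
  have heg : e * g = g := by rw [← hfg, ← mul_assoc, hef]
  have hge : g * e = g := by rw [← hgf, mul_assoc, hfe]
  have hg' : ∀ z, g * (g * z) = g * z := fun z => by rw [← mul_assoc, hg]
  refine absorb hpi e g (g * x * d) (d * y * r * g) he hg heg hge ?_ ?_ ?_ ?_ ?_
  · have h1 : g * x * d * (d * y * r * g) = g * a * r * g := by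
      rw [ha]
      simp only [mul_assoc, hdd']
      rw [← mul_assoc g f, hgf, ← mul_assoc f r, hfr]
    rw [h1, mul_assoc g, ← hgr, hg, hg]
  · simp only [mul_assoc, hg']
  · simp only [mul_assoc, hg]
  · rw [← hgf]
    simp only [mul_assoc]
    rw [← mul_assoc f d, hfd]; simp
  · rw [← hfg]
    simp only [mul_assoc]
    rw [← mul_assoc d f, hdf]; simp
end

section
/- Let R be an s-unital purely infinite exchange ring. Then the matrix ring Mₙ(R) is properly purely infinite for every n ≥ 1. -/
set_option linter.unusedSimpArgs false
set_option linter.unusedVariables false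

namespace PIExchange

/-- Elementwise form of `e ⊕ x ≼ e`. -/
def KK {R : Type*} [NonUnitalRing R] (e x : R) : Prop :=
  ∃ a b c d : R, a * e * b = e ∧ a * e * d = 0 ∧ c * e * b = 0 ∧ c * e * d = x

/-- Two-sided ideals as sets. -/
structure IsId {R : Type*} [NonUnitalRing R] (M : Set R) : Prop where
  zero : (0 : R) ∈ M
  add : ∀ {x y}, x ∈ M → y ∈ M → x + y ∈ M
  neg : ∀ {x}, x ∈ M → -x ∈ M
  left : ∀ {x y}, y ∈ M → x * y ∈ M
  right : ∀ {x y}, x ∈ M → x * y ∈ M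

theorem pairSub_of {R : Type*} [NonUnitalRing R] {e a b c d : R}
    (h1 : a * e * b = e) (h2 : a * e * d = 0) (h3 : c * e * b = 0) (h4 : c * e * d = e) :
    PairSub e e e := by
  refine ⟨!![a; c], !![b, d], ?_⟩
  ext i j
  fin_cases i <;> fin_cases j <;> simp [Matrix.mul_apply, h1, h2, h3, h4]

theorem pi2 {R : Type*} [NonUnitalRing R] (hpi : ∀ a b : R, MemRaR a b → ElemSub b a)
    (s x y x' y' : R) : ∃ p q, x * s * y + x' * s * y' = p * s * q :=
  hpi s _ ⟨2, ![x, x'], ![y, y'], by simp⟩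

theorem KK_isId {R : Type*} [NonUnitalRing R] {e : R} (he : e * e = e) :
    IsId {x | KK e x} where
  zero := ⟨e, e, 0, 0, by simp [he], by simp, by simp, by simp⟩
  add := by
    rintro x y ⟨a, b, c, d, h1, h2, h3, h4⟩ ⟨a', b', c', d', k1, k2, k3, k4⟩
    have f : ∀ u v : R, u * a' * e * (b' * v) = u * e * v := by
      intro u v
      calc u * a' * e * (b' * v) = u * (a' * e * b') * v := by simp only [mul_assoc]
        _ = _ := by rw [k1]
    have f2 : ∀ u : R, u * a' * e * d' = 0 := by
      intro u
      calc u * a' * e * d' = u * (a' * e * d') := by simp only [mul_assoc]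
        _ = 0 := by rw [k2, mul_zero]
    have f3 : ∀ u : R, c' * e * (b' * u) = 0 := by
      intro u
      rw [← mul_assoc, k3, zero_mul]
    refine ⟨a * a', b' * b, c * a' + c', b' * d + d', ?_, ?_, ?_, ?_⟩
    · rw [f, h1]
    · rw [mul_add, f, f2, h2, add_zero]
    · rw [add_mul, add_mul, f, f3, h3, add_zero]
    · rw [add_mul, add_mul, mul_add, mul_add, f, f2, f3, h4, k4, add_zero, zero_add]
  neg := by
    rintro x ⟨a, b, c, d, h1, h2, h3, h4⟩
    exact ⟨a, b, -c, d, h1, h2, by simp [h3], by simp [h4]⟩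
  left := by
    rintro x y ⟨a, b, c, d, h1, h2, h3, h4⟩
    exact ⟨a, b, x * c, d, h1, h2, by rw [mul_assoc x, mul_assoc x, h3, mul_zero],
      by rw [mul_assoc x, mul_assoc x, h4]⟩
  right := by
    rintro x y ⟨a, b, c, d, h1, h2, h3, h4⟩
    exact ⟨a, b, c, d * y, h1, by rw [← mul_assoc, h2, zero_mul], h3,
      by rw [← mul_assoc, h4]⟩

/-- Key step: if `g ≤ e`, `h = e - g`-like data, then `t` with `g + t ∈ RgR` is in `K(e)`. -/
theorem KK_corner {R : Type*} [NonUnitalRing R] (hpi : ∀ a b : R, MemRaR a b → ElemSub b a)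
    {g h e x y : R} (hg : g * g = g) (hh : h * h = h) (hgh : g * h = 0) (hhg : h * g = 0)
    (he : g + h = e) : KK e (h * x * g * y * h) := by
  obtain ⟨p, q, hpq⟩ := pi2 hpi g g g (h * x) (y * h)
  have key : ∀ u v : R, u * p * g * (q * v) = u * g * v + u * h * x * g * y * h * v := by
    intro u v
    calc u * p * g * (q * v) = u * (p * g * q) * v := by simp only [mul_assoc]
      _ = _ := by rw [← hpq, hg, hg]; simp only [mul_assoc, mul_add, add_mul]
  have ge : g * e = g := by rw [← he, mul_add, hg, hgh, add_zero]
  have hee : h * e = h := by rw [← he, mul_add, hh, hhg, zero_add]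
  have z1 : ∀ u : R, g * (h * u) = 0 := fun u => by rw [← mul_assoc, hgh, zero_mul]
  have z2 : ∀ u : R, h * (g * u) = 0 := fun u => by rw [← mul_assoc, hhg, zero_mul]
  have z3 : ∀ u : R, g * (g * u) = g * u := fun u => by rw [← mul_assoc, hg]
  have z4 : ∀ u : R, h * (h * u) = h * u := fun u => by rw [← mul_assoc, hh]
  have k2 : ∀ u v : R, u * p * g * (g * q * v) =
      u * g * v + u * h * x * g * y * h * v := by
    intro u v
    rw [← key]; simp only [mul_assoc, z3]
  refine ⟨g * p * g + h, g * q * g + h, h * p * g, g * q * h, ?_, ?_, ?_, ?_⟩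
  · rw [add_mul, mul_assoc _ g e, ge, hee, add_mul, mul_add, k2, ← he]
    simp [mul_assoc, mul_add, z1, z2, z3, z4, hg, hh, hgh, hhg]
  · rw [add_mul, mul_assoc _ g e, ge, hee, add_mul, k2]
    simp [mul_assoc, z1, z2, z3, z4, hg, hh, hgh, hhg]
  · rw [mul_assoc _ g e, ge, mul_add, k2]
    simp [mul_assoc, z1, z2, z3, z4, hg, hh, hgh, hhg]
  · rw [mul_assoc _ g e, ge, k2]
    simp [mul_assoc, z1, z2, z3, z4, hg, hh, hgh, hhg]

theorem KK_off {R : Type*} [NonUnitalRing R] (hpi : ∀ a b : R, MemRaR a b → ElemSub b a)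
    {e w x : R} (he : e * e = e) (ew : e * w = 0) (we : w * e = w) (xe : x * e = 0) :
    KK e (w * x) := by
  obtain ⟨p, q, hpq⟩ := pi2 hpi e e e w x
  rw [he, he, we] at hpq
  have c1 : e * (e + w * x) = e := by rw [mul_add, he, ← mul_assoc, ew, zero_mul, add_zero]
  have c2 : (e + w * x) * e = e := by rw [add_mul, he, mul_assoc, xe, mul_zero, add_zero]
  have l : ∀ u v : R, u * p * e * (q * v) = u * (e + w * x) * v := by
    intro u v; rw [hpq]; simp only [mul_assoc]
  have l1 : e * p * e * q = e := by
    have h := c1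
    rw [hpq] at h
    simpa only [mul_assoc] using h
  have l2 : p * e * (q * e) = e := by rw [← mul_assoc, ← hpq, c2]
  refine ⟨e * p, q * e, p - e * p, q - q * e, ?_, ?_, ?_, ?_⟩
  · rw [l, c1, he]
  · rw [mul_sub, l, c1, l1, he, sub_self]
  · rw [sub_mul, sub_mul, l, l2, c1, he, sub_self]
  · rw [sub_mul, sub_mul, mul_sub, mul_sub, l, l1, l2, c1, he, ← hpq]; abel

theorem core {R Q : Type*} [NonUnitalRing R] [NonUnitalRing Q] (π : R →ₙ+* Q)
    (hsurj : Function.Surjective π) (hex : IsExchangeRing R)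
    (hpi : ∀ a b : R, MemRaR a b → ElemSub b a) {e : R} (he : e * e = e)
    (hK : ∀ x, KK e x → π x = 0) (hne : π e ≠ 0)
    (hgen : ∀ s, π s ≠ 0 → ∃ x y, π (x * s * y) = π e) : IsDivisionRingPred Q := by
  have hε : π e * π e = π e := by rw [← map_mul, he]
  have B : ∀ w x, e * w = 0 → w * e = w → x * e = 0 → π (x * w) = π e → False := by
    intro w x h1 h2 h3 h4
    have h5 := hK _ (KK_off hpi he h1 h2 h3)
    apply hne
    rw [← hε, ← h4]
    rw [map_mul] at h5 ⊢
    calc π x * π w * (π x * π w) = π x * (π w * π x) * π w := by simp only [mul_assoc]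
      _ = 0 := by rw [h5]; simp
  have hr : ∀ r, π r * π e = π r := by
    intro r
    by_contra hcon
    have hz : π (r - r * e) ≠ 0 := by
      rw [map_sub, map_mul, sub_ne_zero]; exact fun h => hcon h.symm
    obtain ⟨x, y, hxy⟩ := hgen _ hz
    have ze : (r - r * e) * e = 0 := by rw [sub_mul, mul_assoc, he, sub_self]
    generalize r - r * e = z at *
    refine B (y * e - e * y * e) (e * x * z) ?_ ?_ ?_ ?_
    · rw [mul_sub, ← mul_assoc, ← mul_assoc, ← mul_assoc, he, sub_self]
    · rw [sub_mul, mul_assoc y, he, mul_assoc _ e e, he]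
    · rw [mul_assoc, ze, mul_zero]
    · have : e * x * z * (y * e - e * y * e) = e * (x * z * y) * e := by
        rw [mul_sub, show e * x * z * (e * y * e) = e * x * (z * e) * y * e by
          simp only [mul_assoc], ze]
        simp [mul_assoc]
      rw [this, map_mul, map_mul, hxy, hε, hε]
  have hl : ∀ r, π e * π r = π r := by
    intro r
    by_contra hcon
    have hz : π (r - e * r) ≠ 0 := by
      rw [map_sub, map_mul, sub_ne_zero]; exact fun h => hcon h.symm
    obtain ⟨x, y, hxy⟩ := hgen _ hz
    have ze : e * (r - e * r) = 0 := by rw [mul_sub, ← mul_assoc, he, sub_self]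
    generalize r - e * r = z at *
    refine B (z * y * e) (e * x - e * x * e) ?_ ?_ ?_ ?_
    · rw [← mul_assoc, ← mul_assoc, ze]; simp
    · rw [mul_assoc _ e e, he]
    · rw [sub_mul, mul_assoc _ e e, he, sub_self]
    · have : (e * x - e * x * e) * (z * y * e) = e * (x * z * y) * e := by
        rw [sub_mul, show e * x * e * (z * y * e) = e * x * (e * z) * y * e by
          simp only [mul_assoc], ze]
        simp [mul_assoc]
      rw [this, map_mul, map_mul, hxy, hε, hε]
  -- every nonzero element is right invertible
  have A0 : ∀ s, e * s = s → π s ≠ 0 → ∃ y, π s * π y = π e := by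
    intro s es hs
    obtain ⟨x, y, hxy⟩ := hgen s hs
    obtain ⟨f, hf⟩ : ∃ f, f = s * y * x := ⟨_, rfl⟩
    have ef : e * f = f := by rw [hf, ← mul_assoc, ← mul_assoc, es]
    have ff : π f * π f = π f := by
      calc π f * π f = π s * π y * π (x * s * y) * π x := by
            rw [hf]; simp only [map_mul, mul_assoc]
        _ = _ := by rw [hxy, mul_assoc, hl, hf, map_mul, map_mul]
    obtain ⟨g0, r, s', hg0, h1, h2⟩ := hex f
    have hg0 : g0 * g0 = g0 := hg0
    have eg0 : e * g0 = g0 := by rw [h1, ← mul_assoc, ef]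
    have πg0 : π g0 = π f := by
      have a1 : π f * π g0 = π g0 := by rw [h1, map_mul, ← mul_assoc, ff]
      have a2 : π f * π g0 = π f := by
        rw [h2, map_sub, map_add, map_mul, mul_sub, mul_add, ff, ← mul_assoc, ff]; abel
      rw [← a1, a2]
    obtain ⟨g, hg⟩ : ∃ g, g = g0 * e := ⟨_, rfl⟩
    have πg : π g = π f := by rw [hg, map_mul, hr, πg0]
    have eg : e * g = g := by rw [hg, ← mul_assoc, eg0]
    have ge : g * e = g := by rw [hg, mul_assoc, he]
    have gg : g * g = g := by
      calc g * g = g0 * (e * g0) * e := by rw [hg]; simp only [mul_assoc]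
        _ = g := by rw [eg0, hg0, hg]
    have gne : π g ≠ 0 := by
      intro h0
      apply hne
      rw [πg] at h0
      calc π e = π (x * s * y) * π (x * s * y) := by rw [hxy, hε]
        _ = π x * π f * (π s * π y) := by rw [hf]; simp only [map_mul, mul_assoc]
        _ = 0 := by rw [h0]; simp
    obtain ⟨x2, y2, hxy2⟩ := hgen g gne
    have hh : (e - g) * (e - g) = e - g := by
      rw [sub_mul, mul_sub, mul_sub, he, eg, ge, gg]; abel
    have t0 := hK _ (KK_corner hpi (x := x2) (y := y2) gg hh
      (by rw [mul_sub, ge, gg, sub_self]) (by rw [sub_mul, eg, gg, sub_self])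
      (add_sub_cancel g e))
    have t1 : π (e - g) = 0 := by
      rw [← t0]
      calc π (e - g) = π (e - g) * π (x2 * g * y2) * π (e - g) := by
            rw [hxy2, hr, ← map_mul, hh]
        _ = _ := by simp only [map_mul, mul_assoc]
    refine ⟨y * x, ?_⟩
    rw [map_sub, sub_eq_zero, πg, hf] at t1
    rw [t1, ← map_mul, mul_assoc]
  have A : ∀ s, π s ≠ 0 → ∃ y, π s * π y = π e := by
    intro s hs
    have h := A0 (e * s) (by rw [← mul_assoc, he]) (by rwa [map_mul, hl])
    rwa [map_mul, hl] at h
  refine ⟨π e, hne, ?_, ?_⟩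
  · intro q
    obtain ⟨r, rfl⟩ := hsurj q
    exact ⟨hl r, hr r⟩
  · intro q hq
    obtain ⟨s, rfl⟩ := hsurj q
    obtain ⟨y, hy⟩ := A s hq
    have yne : π y ≠ 0 := by
      intro h; apply hne; rw [← hy, h, mul_zero]
    obtain ⟨z, hz⟩ := A y yne
    have : π s = π z := by
      rw [← hr s, ← hz, ← mul_assoc, hy, hl]
    exact ⟨π y, hy, by rw [this, hz]⟩

theorem idem {R : Type*} [NonUnitalRing R]
    (hs : IsSUnitalRing R) (hex : IsExchangeRing R) (hpi : IsPurelyInfiniteRing R)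
    {e : R} (he : e * e = e) : KK e e := by
  by_contra hcon
  obtain ⟨M, hKM, hM⟩ := zorn_subset_nonempty {N : Set R | IsId N ∧ e ∉ N} (by
    intro c hc hchain hne
    refine ⟨⋃₀ c, ⟨?_, ?_⟩, fun s hs => Set.subset_sUnion_of_mem hs⟩
    · constructor
      · obtain ⟨N, hN⟩ := hne
        exact ⟨N, hN, (hc hN).1.zero⟩
      · rintro x y ⟨N, hN, hx⟩ ⟨N', hN', hy⟩
        rcases hchain.total hN hN' with h | h
        · exact ⟨N', hN', (hc hN').1.add (h hx) hy⟩
        · exact ⟨N, hN, (hc hN).1.add hx (h hy)⟩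
      · rintro x ⟨N, hN, hx⟩
        exact ⟨N, hN, (hc hN).1.neg hx⟩
      · rintro x y ⟨N, hN, hx⟩
        exact ⟨N, hN, (hc hN).1.left hx⟩
      · rintro x y ⟨N, hN, hx⟩
        exact ⟨N, hN, (hc hN).1.right hx⟩
    · rintro ⟨N, hN, hx⟩
      exact (hc hN).2 hx) {x | KK e x} ⟨KK_isId he, hcon⟩
  have hId : IsId M := hM.prop.1
  have heM : e ∉ M := hM.prop.2
  let I : TwoSidedIdeal R := TwoSidedIdeal.mk' M hId.zero hId.add hId.neg hId.left hId.right
  let π : R →ₙ+* I.ringCon.Quotient :=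
    { toFun := fun r => (r : I.ringCon.Quotient)
      map_mul' := fun _ _ => rfl
      map_zero' := rfl
      map_add' := fun _ _ => rfl }
  have hker : ∀ r, π r = 0 ↔ r ∈ M := by
    intro r
    have h1 : π r = 0 ↔ I.ringCon r 0 := (RingCon.eq _)
    rw [h1, ← TwoSidedIdeal.mem_iff]
    exact TwoSidedIdeal.mem_mk' _ _ _ _ _ _ _
  refine hpi.1 I (core π ?_ hex hpi.2 he (fun x hx => (hker x).2 (hKM hx))
    (fun h => heM ((hker e).1 h)) ?_)
  · intro q
    obtain ⟨r, hr⟩ := Quotient.exists_rep q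
    exact ⟨r, hr⟩
  · intro s hsne
    have hsM : s ∉ M := fun h => hsne ((hker s).2 h)
    by_contra hno
    push Not at hno
    let N : Set R := {z | ∃ m ∈ M, ∃ x y, z = m + x * s * y}
    have hN : IsId N := by
      constructor
      · exact ⟨0, hId.zero, 0, 0, by simp⟩
      · rintro _ _ ⟨m, hm, x, y, rfl⟩ ⟨m', hm', x', y', rfl⟩
        obtain ⟨p, q, h⟩ := pi2 hpi.2 s x y x' y'
        exact ⟨m + m', hId.add hm hm', p, q, by rw [← h]; abel⟩
      · rintro _ ⟨m, hm, x, y, rfl⟩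
        exact ⟨-m, hId.neg hm, -x, y, by simp [add_comm]⟩
      · rintro r _ ⟨m, hm, x, y, rfl⟩
        exact ⟨r * m, hId.left hm, r * x, y, by simp only [mul_add, mul_assoc]⟩
      · rintro _ r ⟨m, hm, x, y, rfl⟩
        exact ⟨m * r, hId.right hm, x, y * r, by simp only [add_mul, mul_assoc]⟩
    have heN : e ∉ N := by
      rintro ⟨m, hm, x, y, h⟩
      apply hno x y
      rw [h, map_add, (hker m).2 hm, zero_add]
    have hMN : M ⊆ N := fun m hm => ⟨m, hm, 0, 0, by simp⟩
    have hsN : s ∈ N := by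
      obtain ⟨⟨u, hu⟩, ⟨v, hv⟩⟩ := hs s
      exact ⟨0, hId.zero, u, v, by rw [hu, hv, zero_add]⟩
    exact hsM (hM.le_of_ge ⟨hN, heN⟩ hMN hsN)

theorem left_unit {R : Type*} [NonUnitalRing R] (hs : IsSUnitalRing R) (S : Finset R) :
    ∃ u, ∀ x ∈ S, u * x = x := by
  classical
  induction S using Finset.induction with
  | empty => exact ⟨0, by simp⟩
  | insert y S _ ih =>
    obtain ⟨u, hu⟩ := ih
    obtain ⟨u', hu'⟩ := (hs (y - u * y)).1
    rw [mul_sub] at hu'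
    refine ⟨u + (u' - u' * u), fun x hx => ?_⟩
    rw [add_mul, sub_mul, mul_assoc]
    rcases Finset.mem_insert.1 hx with rfl | hx
    · rw [hu']; abel
    · rw [hu x hx, sub_self, add_zero]

theorem right_unit {R : Type*} [NonUnitalRing R] (hs : IsSUnitalRing R) (S : Finset R) :
    ∃ u, ∀ x ∈ S, x * u = x := by
  classical
  induction S using Finset.induction with
  | empty => exact ⟨0, by simp⟩
  | insert y S _ ih =>
    obtain ⟨u, hu⟩ := ih
    obtain ⟨u', hu'⟩ := (hs (y - y * u)).2
    rw [sub_mul, mul_assoc] at hu'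
    refine ⟨u + (u' - u * u'), fun x hx => ?_⟩
    rw [mul_add, mul_sub, ]
    rcases Finset.mem_insert.1 hx with rfl | hx
    · rw [hu']; abel
    · rw [← mul_assoc, hu x hx, sub_self, add_zero]

theorem right_idem {R : Type*} [NonUnitalRing R] (hs : IsSUnitalRing R)
    (hex : IsExchangeRing R) (S : Finset R) :
    ∃ g, g * g = g ∧ ∀ x ∈ S, x * g = x := by
  obtain ⟨v, hv⟩ := right_unit hs S
  obtain ⟨g, r, s, hg, -, h⟩ := hex v
  refine ⟨g, hg, fun x hx => ?_⟩
  rw [h, mul_sub, mul_add, ← mul_assoc, hv x hx]; abel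

/-- Many orthogonal copies. -/
theorem copies {R : Type*} [NonUnitalRing R] {g p1 p2 q1 q2 : R}
    (h11 : p1 * q1 = g) (h12 : p1 * q2 = 0) (h21 : p2 * q1 = 0) (h22 : p2 * q2 = g)
    (hp1 : p1 * g = p1) (hp2 : p2 * g = p2) (hq1 : g * q1 = q1) (hq2 : g * q2 = q2)
    (hq1' : q1 * g = q1) (hp1' : g * p1 = p1) (hp2' : g * p2 = p2) (hq2' : q2 * g = q2) :
    ∃ x y : ℕ → R, (∀ i j, x i * y j = if i = j then g else 0) ∧
      (∀ i, x i * g = x i) ∧ (∀ i, g * y i = y i) := by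
  let x : ℕ → R := fun i => Nat.rec p1 (fun _ z => z * p2) i
  let y : ℕ → R := fun i => Nat.rec q1 (fun _ z => q2 * z) i
  have x0 : x 0 = p1 := rfl
  have xs : ∀ i, x (i + 1) = x i * p2 := fun _ => rfl
  have y0 : y 0 = q1 := rfl
  have ys : ∀ i, y (i + 1) = q2 * y i := fun _ => rfl
  have xg : ∀ i, x i * g = x i := by
    intro i
    cases i with
    | zero => rw [x0, hp1]
    | succ i => rw [xs, mul_assoc, hp2]
  refine ⟨x, y, ?_, xg, ?_⟩
  · intro i
    induction i with
    | zero =>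
      intro j
      cases j with
      | zero => simp [x0, y0, h11]
      | succ j => rw [x0, ys, ← mul_assoc, h12]; simp
    | succ i ih =>
      intro j
      cases j with
      | zero => rw [xs, y0, mul_assoc, h21]; simp
      | succ j =>
        rw [xs, ys, show x i * p2 * (q2 * y j) = x i * (p2 * q2) * y j by
          simp only [mul_assoc], h22, xg, ih]
        simp
  · intro i
    cases i with
    | zero => rw [y0, hq1]
    | succ i => rw [ys, ← mul_assoc, hq2]

end PIExchange

open PIExchange

/-- Theorem 5.9 (ExchangePiMatrices): let `R` be an s-unital purely infinite exchange ring.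
Then `Mₙ(R)` is properly purely infinite for every `n ≥ 1`. -/
theorem matrix_properlyPurelyInfinite_of_sunital_exchange {R : Type*} [NonUnitalRing R]
    (hs : IsSUnitalRing R) (hex : IsExchangeRing R) (hpi : IsPurelyInfiniteRing R) :
    ∀ n : ℕ, 0 < n → IsProperlyPurelyInfiniteRing (Matrix (Fin n) (Fin n) R) := by
  classical
  intro n _ A hA
  refine ⟨hA, ?_⟩
  let S : Finset R := Finset.univ.image (fun ij : Fin n × Fin n => A ij.1 ij.2)
  have hS : ∀ i j, A i j ∈ S := fun i j => Finset.mem_image.2 ⟨(i, j), by simp, rfl⟩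
  obtain ⟨u, hu⟩ := left_unit hs S
  obtain ⟨g, gg, hg⟩ := right_idem hs hex (insert u S)
  have ug : u * g = u := hg u (Finset.mem_insert_self _ _)
  have Ag : ∀ i j, A i j * g = A i j := fun i j => hg _ (Finset.mem_insert_of_mem (hS i j))
  have uA : ∀ i j, u * A i j = A i j := fun i j => hu _ (hS i j)
  obtain ⟨a, b, c, d, h1, h2, h3, h4⟩ := idem hs hex hpi gg
  have gz : ∀ z, g * (g * z) = g * z := fun z => by rw [← mul_assoc, gg]
  have red : ∀ z w v, z * g * w = v → g * z * g * (g * w * g) = g * v * g := by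
    rintro z w v rfl
    simp only [mul_assoc, gz]
  obtain ⟨p1, hp1⟩ : ∃ p, p = g * a * g := ⟨_, rfl⟩
  obtain ⟨p2, hp2⟩ : ∃ p, p = g * c * g := ⟨_, rfl⟩
  obtain ⟨q1, hq1⟩ : ∃ p, p = g * b * g := ⟨_, rfl⟩
  obtain ⟨q2, hq2⟩ : ∃ p, p = g * d * g := ⟨_, rfl⟩
  have h11 : p1 * q1 = g := by rw [hp1, hq1, red _ _ _ h1, gg, gg]
  have h12 : p1 * q2 = 0 := by rw [hp1, hq2, red _ _ _ h2]; simp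
  have h21 : p2 * q1 = 0 := by rw [hp2, hq1, red _ _ _ h3]; simp
  have h22 : p2 * q2 = g := by rw [hp2, hq2, red _ _ _ h4, gg, gg]
  have lg : ∀ z, g * (g * z * g) = g * z * g := fun z => by simp only [mul_assoc, gz]
  have rg : ∀ z, (g * z * g) * g = g * z * g := fun z => by simp only [mul_assoc, gg]
  obtain ⟨x, y, hxy, xg, gy⟩ := copies h11 h12 h21 h22 (by rw [hp1, rg]) (by rw [hp2, rg])
    (by rw [hq1, lg]) (by rw [hq2, lg]) (by rw [hq1, rg]) (by rw [hp1, lg]) (by rw [hp2, lg])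
    (by rw [hq2, rg])
  obtain ⟨e, hedef⟩ : ∃ e, e = ∑ k : Fin n, ∑ l : Fin n, y k * A k l * x l := ⟨_, rfl⟩
  have ge : g * e = e := by
    rw [hedef]; simp only [Finset.mul_sum, ← mul_assoc, gy]
  have eg : e * g = e := by
    rw [hedef]; simp only [Finset.sum_mul, mul_assoc, xg]
  have hA' : ∀ i j : Fin n, u * x i * e * y j = A i j := by
    intro i j
    have : u * x i * e * y j =
        ∑ k : Fin n, ∑ l : Fin n, u * (x i * y k) * A k l * (x l * y j) := by
      rw [hedef]; simp only [Finset.mul_sum, Finset.sum_mul, mul_assoc]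
    rw [this, Finset.sum_eq_single i, Finset.sum_eq_single j]
    · simp only [hxy, if_true, ug, uA, Ag]
    · intro l _ hl
      rw [hxy l j, if_neg (fun h => hl (Fin.ext h)), mul_zero]
    · simp
    · intro k _ hk
      rw [hxy i k, if_neg (fun h => hk (Fin.ext h).symm)]
      simp
    · simp
  obtain ⟨p, q, hpq⟩ := pi2 hpi.2 e q1 p1 q2 p2
  have expand : ∀ z w v, z * (q1 * e * p1 + q2 * e * p2) * w = v → ∀ i j : Fin n,
      ((Matrix.of fun i k : Fin n => u * x i * z * p * y k) * A *
        (Matrix.of fun l j : Fin n => x l * q * w * y j)) i j = u * x i * v * y j := by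
    rintro z w v rfl i j
    rw [hpq]
    have : u * x i * (z * (p * e * q) * w) * y j =
      ∑ k : Fin n, ∑ l : Fin n, u * x i * z * p * y k * A k l * (x l * q * w * y j) := by
      rw [hedef]; simp only [Finset.mul_sum, Finset.sum_mul, mul_assoc]
    rw [this, Finset.sum_comm]
    simp only [Matrix.mul_apply, Matrix.of_apply, Finset.sum_mul]
  have sm : ∀ z w, z * (q1 * e * p1 + q2 * e * p2) * w =
      (z * q1) * e * (p1 * w) + (z * q2) * e * (p2 * w) := by
    intro z w; simp only [mul_add, add_mul, mul_assoc]
  refine pairSub_of (a := Matrix.of fun i k : Fin n => u * x i * p1 * p * y k)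
    (b := Matrix.of fun l j : Fin n => x l * q * q1 * y j)
    (c := Matrix.of fun i k : Fin n => u * x i * p2 * p * y k)
    (d := Matrix.of fun l j : Fin n => x l * q * q2 * y j) ?_ ?_ ?_ ?_
  · ext i j
    rw [expand p1 q1 e (by rw [sm, h11, h12, h21, ge, eg]; simp), hA']
  · ext i j
    rw [expand p1 q2 0 (by rw [sm, h11, h12, h22]; simp)]; simp
  · ext i j
    rw [expand p2 q1 0 (by rw [sm, h11, h21, h22]; simp)]; simp
  · ext i j
    rw [expand p2 q2 e (by rw [sm, h12, h21, h22, ge, eg]; simp), hA']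
end

section
/- Let V be an abelian monoid with the refinement property and let u ∈ V. Suppose that for every o-ideal I of V, the congruence class of u in the quotient monoid V/I is not irreducible (i.e. either u ∈ I, or there exist a, b ∈ V with a ∉ I, b ∉ I, and a + b ≡_I u). Then there exist x, y ∈ V such that u = 2x + 3y. -/
/-- Algebraic preorder. -/
def ALe {V : Type*} [AddCommMonoid V] (a b : V) : Prop := ∃ c, a + c = b

/-- The refinement property. -/
def Refn (V : Type*) [AddCommMonoid V] : Prop :=
  ∀ x1 x2 y1 y2 : V, x1 + x2 = y1 + y2 →
      ∃ z11 z12 z21 z22 : V,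
        z11 + z12 = x1 ∧ z21 + z22 = x2 ∧ z11 + z21 = y1 ∧ z12 + z22 = y2

/-- O-ideals. -/
def OIdl {V : Type*} [AddCommMonoid V] (I : Set V) : Prop :=
  (0 : V) ∈ I ∧ (∀ x ∈ I, ∀ y ∈ I, x + y ∈ I) ∧ (∀ x y : V, x + y ∈ I → x ∈ I ∧ y ∈ I)

section
variable {V : Type*} [AddCommMonoid V]

theorem ALe.refl (a : V) : ALe a a := ⟨0, by simp⟩

theorem ALe.trans {a b c : V} (h : ALe a b) (h' : ALe b c) : ALe a c := by
  obtain ⟨d, rfl⟩ := h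
  obtain ⟨e, rfl⟩ := h'
  exact ⟨d + e, by abel⟩

theorem ALe.add {a b c d : V} (h : ALe a b) (h' : ALe c d) : ALe (a + c) (b + d) := by
  obtain ⟨e, rfl⟩ := h
  obtain ⟨f, rfl⟩ := h'
  exact ⟨e + f, by abel⟩

theorem ALe.nsmul {a b : V} (h : ALe a b) (n : ℕ) : ALe (n • a) (n • b) := by
  obtain ⟨e, rfl⟩ := h
  exact ⟨n • e, by rw [nsmul_add]⟩

theorem ALe.left (a b : V) : ALe a (a + b) := ⟨b, rfl⟩

theorem ALe.right (a b : V) : ALe b (a + b) := ⟨a, add_comm _ _⟩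

theorem OIdl.down {I : Set V} (hI : OIdl I) {a b : V} (h : ALe a b) (hb : b ∈ I) : a ∈ I := by
  obtain ⟨c, rfl⟩ := h
  exact (hI.2.2 _ _ hb).1

theorem Refn.riesz (R : Refn V) {a b c : V} (h : ALe a (b + c)) :
    ∃ p q, p + q = a ∧ ALe p b ∧ ALe q c := by
  obtain ⟨d, hd⟩ := h
  obtain ⟨z1, z2, z3, z4, h1, h2, h3, h4⟩ := R _ _ _ _ hd
  exact ⟨z1, z2, h1, ⟨z3, h3⟩, ⟨z4, h4⟩⟩

theorem Refn.merge (R : Refn V) {u x1 x2 : V} (h1 : ALe (x1 + x1) u) (h2 : ALe (x2 + x2) u) :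
    ∃ x, ALe (x + x) u ∧ ALe x1 x ∧ ALe x2 (4 • x) := by
  obtain ⟨w, rfl⟩ := h1
  obtain ⟨e, he⟩ := h2
  obtain ⟨A, B, C, D, hA, -, hC, hD⟩ := R _ _ _ _ he
  -- A + B = x2 + x2, A ≤ x1 + x1, B ≤ w
  obtain ⟨p, r, q, s, hpr, hqs, hpq, hrs⟩ := R _ _ _ _ hA
  obtain ⟨p1, p2, q1, t, e1, e2, e3, e4⟩ := R _ _ _ _ (hpq.trans hrs.symm)
  refine ⟨x1 + t, ?_, ALe.left _ _, ?_⟩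
  · refine ⟨p2 + q1 + D, ?_⟩
    rw [← hD, ← hqs, ← e2, ← e4]
    abel
  · have h3 : ALe p (x1 + x1) := ⟨r + C, by rw [← hC, ← hpr]; abel⟩
    have h4 : ALe r (x1 + x1) := ⟨p + C, by rw [← hC, ← hpr]; abel⟩
    have h5 : ALe q1 (x1 + x1) := ALe.trans ⟨p1, by rw [← e3]; abel⟩ h4
    have h6 : ALe x2 ((x1 + x1) + ((x1 + x1) + t)) := by
      rw [← hpq, ← e2]
      exact h3.add (h5.add (ALe.refl t))
    exact h6.trans ⟨3 • t, by abel⟩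

theorem Refn.divStep (R : Refn V) {x y w : V} (h : ALe w (x + y)) :
    ∃ X Y, 2 • x + 3 • y + w = 2 • X + 3 • Y ∧ ALe (x + y) (X + Y) := by
  obtain ⟨v, v', rfl, ⟨x', rfl⟩, ⟨y', rfl⟩⟩ := R.riesz h
  refine ⟨x' + 2 • v', y' + v, by abel, ⟨v', by abel⟩⟩

theorem Refn.riesz_nsmul (R : Refn V) {I : Set V} (hI : OIdl I) {m a : V} (hm : m ∈ I)
    (n : ℕ) : ∀ {b : V}, ALe b (m + n • a) → (∀ t, ALe t a → ALe t b → t ∈ I) → b ∈ I := by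
  induction n with
  | zero =>
    intro b hb _
    exact hI.down (by simpa using hb) hm
  | succ n ih =>
    intro b hb ht
    rw [succ_nsmul, ← add_assoc] at hb
    obtain ⟨p, q, rfl, hp, hq⟩ := R.riesz hb
    exact hI.2.1 _ (ih hp fun t h1 h2 => ht t h1 (h2.trans (ALe.left _ _))) _
      (ht q hq (ALe.right _ _))

theorem Refn.div (R : Refn V) (z : V) (n : ℕ) : ∀ {x y w : V}, ALe z (x + y) →
    ALe w (0 + n • z) → ∃ r, ∃ X Y : V, ALe r 0 ∧ 2 • x + 3 • y + w = 2 • X + 3 • Y + r := by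
  induction n with
  | zero =>
    intro x y w _ hw
    exact ⟨w, x, y, by simpa using hw, rfl⟩
  | succ n ih =>
    intro x y w hz hw
    rw [succ_nsmul, ← add_assoc] at hw
    obtain ⟨p, q, rfl, hp, hq⟩ := R.riesz hw
    obtain ⟨X, Y, h1, h2⟩ := R.divStep (hq.trans hz)
    obtain ⟨r, X', Y', hr, h3⟩ := ih (hz.trans h2) hp
    refine ⟨r, X', Y', hr, ?_⟩
    rw [← h3, ← h1]
    abel

theorem Refn.div' (R : Refn V) {x w : V} {n : ℕ} (h : ALe w (n • x)) :
    ∃ X Y : V, x + x + w = 2 • X + 3 • Y := by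
  obtain ⟨r, X, Y, hr, h1⟩ := R.div x n (x := x) (y := 0) (by simpa using ALe.refl x)
    (by simpa using h)
  have h0 : ALe r (X + Y) := hr.trans ⟨X + Y, by simp⟩
  obtain ⟨X', Y', h2, -⟩ := R.divStep h0
  refine ⟨X', Y', ?_⟩
  rw [← h2, ← h1]
  abel

/-- The o-ideal of elements dominated by a multiple of some `x` with `2x ≤ u`. -/
def halfIdl (u : V) : Set V := {z | ∃ x : V, ∃ n : ℕ, ALe (x + x) u ∧ ALe z (n • x)}

theorem Refn.halfIdl (R : Refn V) (u : V) : OIdl (halfIdl u) := by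
  refine ⟨⟨0, 0, ⟨u, by simp⟩, by simpa using ALe.refl 0⟩, ?_, ?_⟩
  · rintro z1 ⟨x1, n, h1, h2⟩ z2 ⟨x2, m, h3, h4⟩
    obtain ⟨x, hx, h5, h6⟩ := R.merge h1 h3
    refine ⟨x, n + m * 4, hx, ?_⟩
    rw [add_nsmul, mul_nsmul']
    exact (h2.trans (h5.nsmul n)).add (h4.trans (h6.nsmul m))
  · rintro a b ⟨x, n, h1, h2⟩
    exact ⟨⟨x, n, h1, (ALe.left _ _).trans h2⟩, ⟨x, n, h1, (ALe.right _ _).trans h2⟩⟩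

theorem OIdl.adjoin {M : Set V} (hM : OIdl M) (a : V) :
    OIdl {z | ∃ m ∈ M, ∃ n : ℕ, ALe z (m + n • a)} := by
  refine ⟨⟨0, hM.1, 0, by simpa using ALe.refl 0⟩, ?_, ?_⟩
  · rintro z1 ⟨m1, h1, n1, h1'⟩ z2 ⟨m2, h2, n2, h2'⟩
    refine ⟨m1 + m2, hM.2.1 _ h1 _ h2, n1 + n2, ?_⟩
    have := h1'.add h2'
    rwa [add_add_add_comm, ← add_nsmul] at this
  · rintro z1 z2 ⟨m, h1, n, h2⟩
    exact ⟨⟨m, h1, n, (ALe.left _ _).trans h2⟩, ⟨m, h1, n, (ALe.right _ _).trans h2⟩⟩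

theorem exists_maxIdl {I : Set V} (hI : OIdl I) {u : V} (hu : u ∉ I) :
    ∃ M, I ⊆ M ∧ OIdl M ∧ u ∉ M ∧ ∀ J, OIdl J → u ∉ J → M ⊆ J → J ⊆ M := by
  obtain ⟨M, hIM, hM⟩ := zorn_subset_nonempty {J : Set V | OIdl J ∧ u ∉ J} (by
    intro c hc hchain hne
    refine ⟨⋃₀ c, ⟨⟨?_, ?_, ?_⟩, ?_⟩, fun s hs => Set.subset_sUnion_of_mem hs⟩
    · obtain ⟨s, hs⟩ := hne
      exact ⟨s, hs, (hc hs).1.1⟩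
    · rintro x ⟨s, hs, hx⟩ y ⟨t, ht, hy⟩
      rcases hchain.total hs ht with hst | hst
      · exact ⟨t, ht, (hc ht).1.2.1 _ (hst hx) _ hy⟩
      · exact ⟨s, hs, (hc hs).1.2.1 _ hx _ (hst hy)⟩
    · rintro x y ⟨s, hs, hx⟩
      have := (hc hs).1.2.2 _ _ hx
      exact ⟨⟨s, hs, this.1⟩, ⟨s, hs, this.2⟩⟩
    · rintro ⟨s, hs, hx⟩
      exact (hc hs).2 hx) I ⟨hI, hu⟩
  exact ⟨M, hIM, hM.prop.1, hM.prop.2, fun J h1 h2 h3 => hM.le_of_ge ⟨h1, h2⟩ h3⟩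

end


/-- Theorem 6.7 (23div): let `V` be an abelian refinement monoid and `u ∈ V` such that for
every o-ideal `I` of `V`, the class of `u` is not irreducible in the conical quotient
monoid `V/I` (i.e. either `u ∈ I`, or `u ≡_I a + b` for some `a, b ∉ I`). Then `u = 2x + 3y`
for some `x, y ∈ V`. -/
theorem exists_two_smul_add_three_smul {V : Type*} [AddCommMonoid V]
    (href : ∀ x1 x2 y1 y2 : V, x1 + x2 = y1 + y2 →
      ∃ z11 z12 z21 z22 : V,
        z11 + z12 = x1 ∧ z21 + z22 = x2 ∧ z11 + z21 = y1 ∧ z12 + z22 = y2)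
    (u : V)
    (h : ∀ I : Set V, (0 : V) ∈ I → (∀ x ∈ I, ∀ y ∈ I, x + y ∈ I) →
        (∀ x y : V, x + y ∈ I → x ∈ I ∧ y ∈ I) →
        (u ∈ I ∨ ∃ a b : V, a ∉ I ∧ b ∉ I ∧ ∃ c ∈ I, ∃ d ∈ I, a + b + c = u + d)) :
    ∃ x y : V, u = 2 • x + 3 • y := by
  have R : Refn V := href
  have hu : u ∈ halfIdl u := by
    by_contra hu
    obtain ⟨M, hIM, hM, huM, hmax⟩ := exists_maxIdl (R.halfIdl u) hu
    rcases h M hM.1 hM.2.1 hM.2.2 with h0 | ⟨a, b, ha, hb, c, -, d, hd, he⟩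
    · exact huM h0
    rw [add_assoc] at he
    obtain ⟨a', a'', e, e'', h1, h2, h3, h4⟩ := R _ _ _ _ he
    obtain ⟨b', c', b'', c'', k1, k2, k3, k4⟩ := R _ _ _ _ h2
    rw [← h4] at hd
    have hd' := hM.2.2 _ _ hd
    have ha' : a' ∉ M := fun H => ha (h1 ▸ hM.2.1 _ H _ hd'.1)
    have hb' : b' ∉ M := fun H =>
      hb (k3 ▸ hM.2.1 _ H _ (hM.down ⟨c'', k2⟩ hd'.2))
    have hab : ALe (a' + b') u := ⟨c', by rw [← h3, ← k1]; abel⟩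
    have huJ : u ∈ {z | ∃ m ∈ M, ∃ n : ℕ, ALe z (m + n • a')} := by
      by_contra huJ
      exact ha' (hmax _ (hM.adjoin a') huJ (fun m hm => ⟨m, hm, 0, by simpa using ALe.refl m⟩)
        ⟨0, hM.1, 1, by simpa using ALe.refl a'⟩)
    obtain ⟨m, hm, n, hn⟩ := huJ
    refine hb' (R.riesz_nsmul hM hm n (((ALe.right a' b').trans hab).trans hn) ?_)
    intro t h5 h6
    exact hIM ⟨t, 1, (h5.add h6).trans hab, by simpa using ALe.refl t⟩
  obtain ⟨x, n, ⟨w, hw⟩, h2⟩ := hu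
  have h3 : ALe w (n • x) := ALe.trans ⟨x + x, by rw [← hw]; abel⟩ h2
  obtain ⟨X, Y, hXY⟩ := R.div' h3
  exact ⟨X, Y, by rw [← hXY, hw]⟩
end
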